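/- Let P_1, ..., P_m be pairwise commuting orthogonal projections on a Hilbert space ℋ, and let ξ_1, ..., ξ_m ∈ ℋ satisfy P_1 P_2 ⋯ P_m ξ_i = 0 for all 1 ≤ i ≤ m. Then ‖P_1 ξ_1 + ... + P_m ξ_m‖² ≤ (m-1) · Σ_{i=1}^m ‖ξ_i‖². -/

import Mathlib

theorem aux_pyth {𝕜 H : Type*} [RCLike 𝕜] [NormedAddCommGroup H] [InnerProductSpace 𝕜 H]
    [CompleteSpace H] (A : H →L[𝕜] H) (hsa : IsSelfAdjoint A) (hid : IsIdempotentElem A) (z : H) :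
    ‖z‖ ^ 2 = ‖A z‖ ^ 2 + ‖z - A z‖ ^ 2 := by
  have h0 : inner 𝕜 (A z) (z - A z) = 0 := by
    have h1 : inner 𝕜 (A z) (z - A z) = inner 𝕜 z (A (z - A z)) := hsa.isSymmetric z (z - A z)
    have h2 : A (A z) = A z := by
      have := congrArg (fun B : H →L[𝕜] H => B z) hid.eq
      simpa using this
    rw [h1, map_sub, h2, sub_self, inner_zero_right]
  have h := norm_add_sq_eq_norm_sq_add_norm_sq_of_inner_eq_zero (A z) (z - A z) h0
  rw [add_sub_cancel] at h
  nlinarith [h]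

theorem aux_list {𝕜 H : Type*} [RCLike 𝕜] [NormedAddCommGroup H] [InnerProductSpace 𝕜 H]
    [CompleteSpace H] (l : List (H →L[𝕜] H))
    (hsa : ∀ A ∈ l, IsSelfAdjoint A) (hid : ∀ A ∈ l, IsIdempotentElem A)
    (hc : ∀ A ∈ l, ∀ B ∈ l, Commute A B) :
    (∀ y, ‖l.prod y‖ ^ 2 ≤ ‖y‖ ^ 2) ∧
    ∀ y, ‖y‖ ^ 2 - ‖l.prod y‖ ^ 2 ≤ (l.map fun A => ‖y‖ ^ 2 - ‖A y‖ ^ 2).sum := by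
  induction l with
  | nil => simp
  | cons A l ih =>
    obtain ⟨ih1, ih2⟩ := ih (fun B hB => hsa B (List.mem_cons_of_mem _ hB))
      (fun B hB => hid B (List.mem_cons_of_mem _ hB))
      (fun B hB C hC => hc B (List.mem_cons_of_mem _ hB) C (List.mem_cons_of_mem _ hC))
    have hp := aux_pyth A (hsa A List.mem_cons_self) (hid A List.mem_cons_self)
    have hcomm : Commute A l.prod := Commute.list_prod_right _ _
      (fun B hB => hc A List.mem_cons_self B (List.mem_cons_of_mem _ hB))
    have hcy : ∀ y, A (l.prod y) = l.prod (A y) := fun y => by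
      have := congrArg (fun B : H →L[𝕜] H => B y) hcomm.eq
      simpa using this
    have hpr : ∀ y, (A :: l).prod y = A (l.prod y) := fun y => by
      rw [List.prod_cons]; rfl
    constructor
    · intro y
      rw [hpr]
      have := hp (l.prod y)
      have := ih1 y
      nlinarith [sq_nonneg ‖l.prod y - A (l.prod y)‖]
    · intro y
      rw [hpr, List.map_cons, List.sum_cons]
      have h1 := hp (l.prod y)
      have h2 := hp y
      have h3 := ih1 (y - A y)
      rw [map_sub, ← hcy] at h3
      have h4 := ih2 y
      linarith

/-- If `P 0, …, P (m-1)` are pairwise commuting orthogonal projections on a Hilbert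
space and `ξ 0, …, ξ (m-1)` are vectors with `P 0 * P 1 * ⋯ * P (m-1)` killing each
`ξ i`, then `‖∑ i, P i (ξ i)‖² ≤ (m - 1) * ∑ i, ‖ξ i‖²`. -/
theorem norm_sq_sum_proj_le
    {𝕜 H : Type*} [RCLike 𝕜] [NormedAddCommGroup H] [InnerProductSpace 𝕜 H]
    [CompleteSpace H]
    (m : ℕ) (P : Fin m → H →L[𝕜] H)
    (hsa : ∀ i, IsSelfAdjoint (P i))
    (hidem : ∀ i, IsIdempotentElem (P i))
    (hcomm : ∀ i j, Commute (P i) (P j))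
    (ξ : Fin m → H)
    (hker : ∀ i, (List.ofFn P).prod (ξ i) = 0) :
    ‖∑ i, P i (ξ i)‖ ^ 2 ≤ ((m : ℝ) - 1) * ∑ i, ‖ξ i‖ ^ 2 := by
  obtain ⟨-, hl⟩ := aux_list (List.ofFn P)
    (by simpa [List.mem_ofFn] using hsa) (by simpa [List.mem_ofFn] using hidem)
    (by simpa [List.mem_ofFn] using hcomm)
  set y := ∑ i, P i (ξ i) with hy
  have hQ : (List.ofFn P).prod y = 0 := by
    rw [hy, map_sum]
    refine Finset.sum_eq_zero fun i _ => ?_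
    have hcm : Commute (P i) (List.ofFn P).prod := Commute.list_prod_right _ _
      (by simpa [List.mem_ofFn] using hcomm i)
    have := congrArg (fun B : H →L[𝕜] H => B (ξ i)) hcm.eq
    simp only [ContinuousLinearMap.mul_apply] at this
    rw [← this, hker, map_zero]
  have h1 := hl y
  rw [hQ, List.map_ofFn, List.sum_ofFn] at h1
  simp only [Function.comp, Finset.sum_sub_distrib, Finset.sum_const, Finset.card_univ,
    Fintype.card_fin, nsmul_eq_mul, norm_zero] at h1
  have h2 : ‖y‖ ^ 2 ≤ ∑ i, ‖ξ i‖ * ‖P i y‖ := by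
    have e : ((‖y‖ ^ 2 : ℝ) : 𝕜) = ∑ i, inner 𝕜 (ξ i) (P i y) := by
      rw [RCLike.ofReal_pow, ← inner_self_eq_norm_sq_to_K (𝕜 := 𝕜)]
      nth_rewrite 1 [hy]
      rw [sum_inner]
      exact Finset.sum_congr rfl fun i _ => (hsa i).isSymmetric (ξ i) y
    calc ‖y‖ ^ 2 = ‖((‖y‖ ^ 2 : ℝ) : 𝕜)‖ := by
          rw [RCLike.norm_ofReal, abs_of_nonneg (sq_nonneg _)]
      _ ≤ _ := by
          rw [e]
          exact (norm_sum_le _ _).trans (Finset.sum_le_sum fun i _ => norm_inner_le_norm _ _)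
  have h3 := Finset.sum_mul_sq_le_sq_mul_sq Finset.univ (fun i => ‖ξ i‖) (fun i => ‖P i y‖)
  have hS : 0 ≤ ∑ i, ‖ξ i‖ ^ 2 := Finset.sum_nonneg fun i _ => sq_nonneg _
  rcases eq_or_ne y 0 with h0 | h0
  · rw [h0, norm_zero]
    rcases Nat.eq_zero_or_pos m with rfl | hm
    · simp
    · have : (1 : ℝ) ≤ m := by exact_mod_cast hm
      have := mul_nonneg (sub_nonneg.2 this) hS
      simpa using this
  · have hpos : 0 < ‖y‖ ^ 2 := by positivity
    have h4 : (‖y‖ ^ 2) ^ 2 ≤ (∑ i, ‖ξ i‖ * ‖P i y‖) ^ 2 := by gcongr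
    have h5 : ∑ i, ‖P i y‖ ^ 2 ≤ ((m : ℝ) - 1) * ‖y‖ ^ 2 := by linarith
    have h6 := mul_le_mul_of_nonneg_left h5 hS
    refine le_of_mul_le_mul_right ?_ hpos
    linarith
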